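/- Let q be a prime power and let w_1, w_2 be positive integers; use weights (1, w_1, w_2) on 𝔽_q[x_0, x_1, x_2]. Set d_1 = (q−1)/gcd(q−1, w_1), d_2 = (q−1)/gcd(q−1, w_2), and Y = {(1, t_1^{w_1}, t_2^{w_2}) : t_1, t_2 ∈ 𝔽_q^×} ⊆ 𝔽_q^3. If 0 ≤ α ≤ w_1(d_1 − 1), then the minimum distance of the code C_{α,Y} is at most d_2·(d_1 − ⌊α/w_1⌋); that is, there exists a nonzero codeword c ∈ C_{α,Y} with #{P ∈ Y : c(P) ≠ 0} ≤ d_2·(d_1 − ⌊α/w_1⌋). -/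

import Mathlib

open MvPolynomial

/-- Evaluation of multivariate polynomials at the points of a set `Y`, as a linear map. -/
noncomputable def evalOn {n : ℕ} (F : Type) [CommSemiring F] (Y : Set (Fin n → F)) :
    MvPolynomial (Fin n) F →ₗ[F] (Y → F) where
  toFun P := fun y => eval y.val P
  map_add' := by intro P Q; funext y; simp
  map_smul' := by intro c P; funext y; simp [MvPolynomial.smul_eval]

/-- The evaluation code: image of the space of weighted homogeneous polynomials of
degree `α` under evaluation at the points of `Y`. -/
noncomputable def code {n : ℕ} (F : Type) [Field F] (w : Fin n → ℕ) (α : ℕ)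
    (Y : Set (Fin n → F)) : Submodule F (Y → F) :=
  Submodule.map (evalOn F Y) (weightedHomogeneousSubmodule F w α)

/-! A product of `k` factors `X j - s * X i ^ w j`, homogenized by a power of the weight-one
variable `X i`, vanishes, among the points with `i`-th coordinate `1`, at exactly those whose
`j`-th coordinate is one of the `k` chosen values `s`. The weighted torus is a product of finite sets of
powers of units, which have `(q - 1) / gcd (q - 1) (w j)` elements because the group of units is
cyclic. Degree `α` leaves room for `k = ⌊α / w j⌋` factors, and each of them kills one slice of the
torus. -/

section VanishingPolynomial

variable {σ R : Type*} [CommRing R] {w : σ → ℕ} {i : σ}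

theorem isWeightedHomogeneous_X_sub_C_mul_X_pow (hi : w i = 1) (j : σ) (s : R) :
    IsWeightedHomogeneous w (X j - C s * X i ^ w j) (w j) := by
  have hpow : IsWeightedHomogeneous w (X i ^ w j : MvPolynomial σ R) (w j) := by
    simpa [hi] using (isWeightedHomogeneous_X R w i).pow (w j)
  exact (isWeightedHomogeneous_X R w j).sub (hpow.C_mul s)

theorem isWeightedHomogeneous_X_pow_mul_prod (hi : w i = 1) (j : σ) {S : Finset R} {α : ℕ}
    (hS : S.card * w j ≤ α) :
    IsWeightedHomogeneous w
      (X i ^ (α - S.card * w j) * ∏ s ∈ S, (X j - C s * X i ^ w j)) α := by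
  have hprod := IsWeightedHomogeneous.prod S _ (fun _ ↦ w j)
    fun s _ ↦ isWeightedHomogeneous_X_sub_C_mul_X_pow hi j s
  have hmul := ((isWeightedHomogeneous_X R w i).pow (α - S.card * w j)).mul hprod
  simpa [hi, Nat.sub_add_cancel hS] using hmul

end VanishingPolynomial

theorem prod_sub_mem_code {F : Type} [Field F] {n : ℕ} {w : Fin n → ℕ} {i : Fin n} (hi : w i = 1)
    (j : Fin n) {S : Finset F} {α : ℕ} (hS : S.card * w j ≤ α) {Y : Set (Fin n → F)}
    (hY : ∀ y ∈ Y, y i = 1) :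
    (fun y : Y ↦ ∏ s ∈ S, (y.1 j - s)) ∈ code F w α Y := by
  refine ⟨_, isWeightedHomogeneous_X_pow_mul_prod hi j hS, ?_⟩
  funext y
  simp [evalOn, hY y y.2]

section Grid

theorem card_filter_piFinset_mem {ι : Type*} [Fintype ι] [DecidableEq ι] {κ : ι → Type*}
    [∀ i, DecidableEq (κ i)] (A : ∀ i, Finset (κ i)) (j : ι) {T : Finset (κ j)} (hT : T ⊆ A j) :
    {y ∈ Fintype.piFinset A | y j ∈ T}.card =
      T.card * ∏ i ∈ Finset.univ.erase j, (A i).card := by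
  rw [← Fintype.piFinset_update_eq_filter_piFinset_mem A j hT, Fintype.card_piFinset,
    ← Finset.mul_prod_erase _ _ (Finset.mem_univ j), Function.update_self]
  congr 1
  refine Finset.prod_congr rfl fun i hi ↦ ?_
  rw [Function.update_of_ne (Finset.ne_of_mem_erase hi)]

theorem ncard_prod_sub_ne_zero {ι K : Type*} [Fintype ι] [DecidableEq ι] [CommRing K] [IsDomain K]
    (A : ι → Finset K) (j : ι) {S : Finset K} (hS : S ⊆ A j) :
    {y : (Fintype.piFinset A : Set (ι → K)) | ∏ s ∈ S, (y.1 j - s) ≠ 0}.ncard =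
      ((A j).card - S.card) * ∏ i ∈ Finset.univ.erase j, (A i).card := by
  classical
  have hne (y : ι → K) : ∏ s ∈ S, (y j - s) ≠ 0 ↔ y j ∉ S := by
    simp [Finset.prod_eq_zero_iff, sub_eq_zero]
  have hsupport : {y | ∏ s ∈ S, (y j - s) ≠ 0} ∩ (Fintype.piFinset A : Set (ι → K)) =
      {y ∈ Fintype.piFinset A | y j ∈ A j \ S} := by
    ext y
    simp only [hne, Set.mem_inter_iff, Set.mem_ofPred_eq, Finset.mem_coe, Finset.mem_filter,
      Fintype.mem_piFinset, Finset.mem_sdiff]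
    grind
  rw [← Finset.card_sdiff_of_subset hS, ← card_filter_piFinset_mem A j Finset.sdiff_subset,
    ← Set.ncard_coe_finset, ← hsupport]
  exact Set.ncard_subtype (· ∈ Fintype.piFinset A) {y | ∏ s ∈ S, (y j - s) ≠ 0}

theorem exists_mem_code_piFinset {F : Type} [Field F] {n : ℕ} {w : Fin n → ℕ} {i : Fin n}
    (hi : w i = 1) {A : Fin n → Finset F} (hA : A i = {1}) (j : Fin n) {k α : ℕ}
    (hk : k ≤ (A j).card) (hα : k * w j ≤ α) :
    ∃ c ∈ code F w α (Fintype.piFinset A : Set (Fin n → F)),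
      {p | c p ≠ 0}.ncard = ((A j).card - k) * ∏ l ∈ Finset.univ.erase j, (A l).card := by
  classical
  obtain ⟨S, hSA, rfl⟩ := Finset.exists_subset_card_eq hk
  have hone : ∀ y ∈ (Fintype.piFinset A : Set (Fin n → F)), y i = 1 := fun y hy ↦ by
    simpa [hA] using Fintype.mem_piFinset.mp hy i
  exact ⟨_, prod_sub_mem_code hi j hα hone, ncard_prod_sub_ne_zero A j hSA⟩

end Grid

section WeightedTorus

variable (F : Type*) [Field F]

open Classical in
/-- The set of `w`-th powers of nonzero elements of a finite field: the possible values of a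
coordinate of weight `w` on the weighted torus. -/
noncomputable def unitPowers [Fintype F] (w : ℕ) : Finset F :=
  Finset.univ.image fun t : Fˣ ↦ (t : F) ^ w

/-- The points `(1, t₁ ^ w₁, …, tₘ ^ wₘ)` with nonzero `tᵢ`: the evaluation points in the torus of
the weighted projective space with weights `(1, w₁, …, wₘ)`, given by affine representatives whose
coordinate of weight one, at index `0`, is `1`. -/
def weightedTorus {m : ℕ} (w : Fin m → ℕ) : Set (Fin (m + 1) → F) :=
  Set.range fun t : Fin m → Fˣ ↦ Fin.cons 1 fun i ↦ (t i : F) ^ w i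

theorem weightedTorus_pair (w₁ w₂ : ℕ) :
    weightedTorus F ![w₁, w₂] = {y | ∃ t₁ t₂ : Fˣ, y = ![1, (t₁ : F) ^ w₁, (t₂ : F) ^ w₂]} := by
  ext y
  constructor
  · rintro ⟨t, rfl⟩
    exact ⟨t 0, t 1, by ext l; fin_cases l <;> rfl⟩
  · rintro ⟨t₁, t₂, rfl⟩
    exact ⟨![t₁, t₂], by ext l; fin_cases l <;> rfl⟩

variable {F} [Fintype F]

theorem card_unitPowers (w : ℕ) :
    (unitPowers F w).card = (Fintype.card F - 1) / (Fintype.card F - 1).gcd w := by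
  classical
  have hcoe : (unitPowers F w : Set F) =
      Units.val '' ((powMonoidHom w : Fˣ →* Fˣ).range : Set Fˣ) := by
    ext x
    simp [unitPowers]
  rw [← Set.ncard_coe_finset, hcoe, Set.ncard_image_of_injective _ Units.val_injective,
    ← Nat.card_coe_set_eq, SetLike.coe_sort_coe, IsCyclic.card_powMonoidHom_range, Nat.card_units,
    Nat.card_eq_fintype_card]

theorem card_unitPowers_pos (w : ℕ) : 0 < (unitPowers F w).card := by
  classical
  exact Finset.card_pos.mpr (Finset.univ_nonempty.image _)

theorem weightedTorus_eq_piFinset {m : ℕ} (w : Fin m → ℕ) :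
    weightedTorus F w = (Fintype.piFinset
      (Fin.cons {1} fun i ↦ unitPowers F (w i) : Fin (m + 1) → Finset F) : Set _) := by
  ext y
  simp only [weightedTorus, unitPowers, Set.mem_range, Finset.mem_coe, Fintype.mem_piFinset,
    Fin.forall_fin_succ, Fin.cons_zero, Fin.cons_succ, Finset.mem_singleton, Finset.mem_image,
    Finset.mem_univ, true_and, Classical.skolem, funext_iff, eq_comm, exists_and_left]

end WeightedTorus

theorem prod_univ_erase_succ {M : Type*} [CommMonoid M] {m : ℕ} (f : Fin (m + 1) → M)
    (j : Fin m) :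
    ∏ l ∈ Finset.univ.erase j.succ, f l = f 0 * ∏ i ∈ Finset.univ.erase j, f i.succ := by
  simp [← Finset.filter_ne', Finset.prod_filter, Fin.prod_univ_succ, (Fin.succ_ne_zero j).symm]

theorem stmt15_general (F : Type) [Field F] [Fintype F] {m : ℕ} (w d : Fin m → ℕ)
    (hd : ∀ i, d i = (Fintype.card F - 1) / (Fintype.card F - 1).gcd (w i)) (j : Fin m) {α : ℕ}
    (hα : α < w j * d j) :
    ∃ c ∈ code F (Fin.cons 1 w) α (weightedTorus F w), c ≠ 0 ∧
      {p | c p ≠ 0}.ncard = (d j - α / w j) * ∏ i ∈ Finset.univ.erase j, d i := by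
  have hcard (i : Fin m) : (unitPowers F (w i)).card = d i := (card_unitPowers _).trans (hd i).symm
  have hdiv : α / w j < d j := Nat.div_lt_of_lt_mul hα
  have hpos : 0 < (d j - α / w j) * ∏ i ∈ Finset.univ.erase j, d i :=
    Nat.mul_pos (Nat.sub_pos_of_lt hdiv)
      (Finset.prod_pos fun i _ ↦ hcard i ▸ card_unitPowers_pos (w i))
  rw [weightedTorus_eq_piFinset]
  obtain ⟨c, hc, hcount⟩ := exists_mem_code_piFinset (w := Fin.cons 1 w) (i := 0) rfl
    (A := Fin.cons {1} fun i ↦ unitPowers F (w i)) rfl j.succ (k := α / w j) (α := α)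
    (by simpa only [Fin.cons_succ, hcard] using hdiv.le) (Nat.div_mul_le_self α (w j))
  simp only [prod_univ_erase_succ, Fin.cons_succ, Fin.cons_zero, Finset.card_singleton, one_mul,
    hcard] at hcount
  refine ⟨c, hc, fun hzero ↦ hpos.ne ?_, hcount⟩
  simp [← hcount, hzero]

/-- With `q` the cardinality of a finite field `𝔽`, positive
integers `w₁, w₂`, weights `(1, w₁, w₂)` on `𝔽[x₀, x₁, x₂]`,
`dᵢ = (q-1)/gcd(q-1, wᵢ)` and `Y = {(1, t₁^{w₁}, t₂^{w₂}) : t₁, t₂ ∈ 𝔽ˣ}`: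
if `0 ≤ α ≤ w₁(d₁-1)` then the minimum distance of `C_{α,Y}` is at most
`d₂(d₁ - ⌊α/w₁⌋)`, i.e. some nonzero codeword has at most that many nonzero
coordinates. -/
theorem stmt15 (F : Type) [Field F] [Fintype F] (q : ℕ) (hq : Fintype.card F = q)
    (w1 w2 : ℕ) (hw1 : 0 < w1) (hw2 : 0 < w2)
    (d1 d2 : ℕ) (hd1 : d1 = (q - 1) / Nat.gcd (q - 1) w1)
    (hd2 : d2 = (q - 1) / Nat.gcd (q - 1) w2)
    (Y : Set (Fin 3 → F))
    (hY : Y = {y | ∃ t1 t2 : Fˣ, y = ![1, (t1 : F) ^ w1, (t2 : F) ^ w2]})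
    (α : ℕ) (hα : α ≤ w1 * (d1 - 1)) :
    ∃ c ∈ code F ![1, w1, w2] α Y, c ≠ 0 ∧
      {p : Y | c p ≠ 0}.ncard ≤ d2 * (d1 - α / w1) := by
  subst hq
  have hd1_pos : 0 < d1 := by simpa only [hd1, ← card_unitPowers] using card_unitPowers_pos w1
  have hα_lt : α < w1 * d1 :=
    hα.trans_lt (Nat.mul_lt_mul_of_pos_left (Nat.sub_one_lt_of_lt hd1_pos) hw1)
  obtain ⟨c, hc, hne, hcount⟩ := stmt15_general F ![w1, w2] ![d1, d2]
    (Fin.forall_fin_two.mpr ⟨hd1, hd2⟩) 0 hα_lt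
  rw [hY, ← weightedTorus_pair]
  exact ⟨c, hc, hne, by simp [hcount, mul_comm, show Finset.univ.erase (0 : Fin 2) = {1} from rfl]⟩
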